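/- arXiv:1606.01986 — 7 statements merged into one kernel-verified Lean document; each statement's English description precedes it below -/
import Mathlib

section
/- Let n ≥ 1 be an integer and let x, y be real numbers with 0 ≤ y ≤ x. The Lebesgue measure (in ℝ^{2n}) of the convex polytope Λⁿ(x,y), consisting of all tuples (x₁,…,xₙ,y₁,…,yₙ) satisfying 0 ≤ x₁ ≤ ⋯ ≤ xₙ ≤ (x+y)/2, 0 ≤ y₁ ≤ ⋯ ≤ yₙ ≤ (x−y)/2, and yᵢ ≤ xᵢ for all 1 ≤ i ≤ n, equals (x−y)ⁿ (x+y)^{n−1} (x + (2n+1)y) / (2^{2n} n! (n+1)!). -/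
open MeasureTheory

/-!
Reading `(x₁, …, xₙ, y₁, …, yₙ)` as the sequence of points `(xᵢ, yᵢ)` identifies `Λⁿ` with the set
of chains `z₁ ≤ ⋯ ≤ zₙ ≤ (a, b)`, in the product order of the plane, of points of the wedge
`0 ≤ y ≤ x`, where `a = (x + y) / 2` and `b = (x - y) / 2`. The first `n` points of a chain of
length `n + 1` form a chain below its last point, so the volume `Vₙ(a, b)` satisfies
`Vₙ₊₁(a, b) = ∫_{0 ≤ t ≤ b} ∫_{t ≤ s ≤ a} Vₙ(s, t) ds dt`, and this recursion is solved by
`Vₙ(a, b) = bⁿ ((n + 1) aⁿ - n aⁿ⁻¹ b) / (n! (n + 1)!)`.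
-/

open Set
open scoped Nat ENNReal

section Tonelli

variable {α β : Type*} [MeasurableSpace α] [MeasurableSpace β]

theorem measurePreserving_snoc (μ : Measure α) [SigmaFinite μ] (n : ℕ) :
    MeasurePreserving (fun w : α × (Fin n → α) ↦ (Fin.snoc w.2 w.1 : Fin (n + 1) → α))
      (μ.prod (Measure.pi fun _ ↦ μ)) (Measure.pi fun _ ↦ μ) := by
  convert! (measurePreserving_piFinSuccAbove (fun _ : Fin (n + 1) ↦ μ) (Fin.last n)).symm using 1
  ext w : 1
  exact (Fin.insertNth_last' w.1 w.2).symm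

theorem setLIntegral_prod_eq_lintegral_fiber (μ : Measure α) (ν : Measure β) [SFinite μ]
    [SFinite ν] {A : Set (α × β)} (hA : MeasurableSet A) {f : α × β → ℝ≥0∞} (hf : Measurable f) :
    ∫⁻ z in A, f z ∂μ.prod ν = ∫⁻ y, ∫⁻ x in {x | (x, y) ∈ A}, f (x, y) ∂μ ∂ν := by
  rw [← lintegral_indicator hA, lintegral_prod_symm' _ (hf.indicator hA)]
  refine lintegral_congr fun y ↦ ?_
  exact lintegral_indicator (measurable_prodMk_right hA) fun x ↦ f (x, y)

end Tonelli

theorem setLIntegral_Icc_ofReal_eq_sub_of_hasDerivAt {f f' : ℝ → ℝ} {a b : ℝ} (hab : a ≤ b)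
    (hcont : ContinuousOn f (Icc a b)) (hderiv : ∀ x ∈ Ioo a b, HasDerivAt f (f' x) x)
    (hnonneg : ∀ x ∈ Ioo a b, 0 ≤ f' x) :
    ∫⁻ x in Icc a b, ENNReal.ofReal (f' x) = ENNReal.ofReal (f b - f a) := by
  have hint : IntegrableOn f' (Ioc a b) :=
    intervalIntegral.integrableOn_deriv_of_nonneg hcont hderiv hnonneg
  rw [← intervalIntegral.integral_eq_sub_of_hasDerivAt_of_le hab hcont hderiv
      ((intervalIntegrable_iff_integrableOn_Ioc_of_le hab).2 hint),
    intervalIntegral.integral_of_le hab, ← restrict_Ioo_eq_restrict_Ioc,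
    ← restrict_Ioo_eq_restrict_Icc]
  exact (ofReal_integral_eq_lintegral_ofReal (hint.mono_set Ioo_subset_Ioc_self)
    (ae_restrict_of_forall_mem measurableSet_Ioo hnonneg)).symm

section Chains

variable {α : Type*} [Preorder α]

theorem monotone_snoc_iff {n : ℕ} {q : Fin n → α} {z : α} :
    Monotone (Fin.snoc q z : Fin (n + 1) → α) ↔ Monotone q ∧ ∀ i, q i ≤ z := by
  simp [Monotone, Fin.forall_fin_succ', forall_and, Fin.le_last]

/-- The chains `q 0 ≤ ⋯ ≤ q (n - 1) ≤ c` of points of `S`, as a subset of the `n`-fold power of the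
ambient preorder. Keeping the upper end `c` as a parameter is what makes the sets recursive in
`n`. -/
def chainsBelow (S : Set α) (n : ℕ) (c : α) : Set (Fin n → α) :=
  {q | Monotone q ∧ ∀ i, q i ∈ S ∩ Iic c}

theorem snoc_mem_chainsBelow_iff {S : Set α} {n : ℕ} {c z : α} {q : Fin n → α} :
    (Fin.snoc q z : Fin (n + 1) → α) ∈ chainsBelow S (n + 1) c ↔
      z ∈ S ∩ Iic c ∧ q ∈ chainsBelow S n z := by
  simp only [chainsBelow, mem_ofPred_eq, monotone_snoc_iff, Fin.forall_fin_succ', Fin.snoc_castSucc,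
    Fin.snoc_last, mem_inter_iff, mem_Iic]
  constructor
  · rintro ⟨⟨hq, hqz⟩, hqS, hz⟩
    exact ⟨hz, hq, fun i ↦ ⟨(hqS i).1, hqz i⟩⟩
  · rintro ⟨hz, hq, hqS⟩
    exact ⟨⟨hq, fun i ↦ (hqS i).2⟩, fun i ↦ ⟨(hqS i).1, (hqS i).2.trans hz.2⟩, hz⟩

theorem chainsBelow_zero (S : Set α) (c : α) : chainsBelow S 0 c = univ := by
  ext q
  simp [chainsBelow, Subsingleton.monotone]

variable [TopologicalSpace α] [OrderClosedTopology α] [SecondCountableTopology α]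
  [MeasurableSpace α] [OpensMeasurableSpace α]

theorem measurableSet_chainsBelow {S : Set α} (hS : MeasurableSet S) (n : ℕ) (c : α) :
    MeasurableSet (chainsBelow S n c) := by
  have hmem (i : Fin n) : MeasurableSet {q : Fin n → α | q i ∈ S ∩ Iic c} :=
    measurable_pi_apply i (hS.inter measurableSet_Iic)
  have hforall : MeasurableSet {q : Fin n → α | ∀ i, q i ∈ S ∩ Iic c} := by
    simpa only [ofPred_forall] using MeasurableSet.iInter hmem
  exact isClosed_monotone.measurableSet.inter hforall

theorem pi_chainsBelow_succ (μ : Measure α) [SigmaFinite μ] {S : Set α} (hS : MeasurableSet S)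
    (n : ℕ) (c : α) :
    Measure.pi (fun _ ↦ μ) (chainsBelow S (n + 1) c) =
      ∫⁻ z in S ∩ Iic c, Measure.pi (fun _ ↦ μ) (chainsBelow S n z) ∂μ := by
  have hmeas := measurableSet_chainsBelow hS (n + 1) c
  have hsnoc := measurePreserving_snoc μ n
  rw [← hsnoc.measure_preimage hmeas.nullMeasurableSet,
    Measure.prod_apply (hsnoc.measurable hmeas), ← lintegral_indicator (hS.inter measurableSet_Iic)]
  refine lintegral_congr fun z ↦ ?_
  simp only [preimage, mem_ofPred_eq, snoc_mem_chainsBelow_iff]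
  by_cases hz : z ∈ S ∩ Iic c <;> simp [hz]

end Chains

/-- The points of the plane with `0 ≤ y ≤ x`, in which the pairs `(xᵢ, yᵢ)` are constrained to
lie. -/
def wedge : Set (ℝ × ℝ) :=
  {z | 0 ≤ z.2 ∧ z.2 ≤ z.1}

theorem measurableSet_wedge : MeasurableSet wedge :=
  (measurableSet_le measurable_const measurable_snd).inter
    (measurableSet_le measurable_snd measurable_fst)

theorem setLIntegral_wedge_inter_Iic {f : ℝ × ℝ → ℝ≥0∞} (hf : Measurable f) (a b : ℝ) :
    ∫⁻ z in wedge ∩ Iic (a, b), f z = ∫⁻ t in Icc 0 b, ∫⁻ s in Icc t a, f (s, t) := by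
  rw [Measure.volume_eq_prod, setLIntegral_prod_eq_lintegral_fiber _ _
    (measurableSet_wedge.inter measurableSet_Iic) hf, ← lintegral_indicator measurableSet_Icc]
  refine lintegral_congr fun t ↦ ?_
  by_cases ht : t ∈ Icc 0 b
  · have hfiber : {s | (s, t) ∈ wedge ∩ Iic (a, b)} = Icc t a := by
      ext s
      simp [wedge, ht.1, ht.2]
    rw [hfiber, indicator_of_mem ht]
  · have hfiber : {s | (s, t) ∈ wedge ∩ Iic (a, b)} = ∅ := by
      ext s
      simp only [wedge, mem_Icc, mem_inter_iff, mem_ofPred_eq, mem_Iic, Prod.mk_le_mk] at ht ⊢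
      tauto
    rw [hfiber, indicator_of_notMem ht, Measure.restrict_empty, lintegral_zero_measure]

section VolumePolynomials

/-- The volume of `chainsBelow wedge n (a, b)` when `0 ≤ b ≤ a`. For `n = 0` the truncated exponent
`n - 1` is harmless, its term having coefficient `0`. -/
noncomputable def wedgeChainVolume (n : ℕ) (a b : ℝ) : ℝ :=
  b ^ n * ((n + 1) * a ^ n - n * a ^ (n - 1) * b) / (n ! * (n + 1)!)

/-- The `2n + 1`-dimensional volume of the chains of length `n + 1` in the wedge below `(a, t)`
whose last point has second coordinate `t`, when `0 ≤ t ≤ a`. -/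
noncomputable def wedgeChainSliceVolume (n : ℕ) (a t : ℝ) : ℝ :=
  a ^ n * t ^ n * (a - t) / (n ! * (n + 1)!)

variable {n : ℕ} {a b t : ℝ}

theorem wedgeChainVolume_nonneg (hb : 0 ≤ b) (hba : b ≤ a) : 0 ≤ wedgeChainVolume n a b := by
  have ha : 0 ≤ a := hb.trans hba
  have hfactor : n * a ^ (n - 1) * b ≤ (n + 1) * a ^ n := by
    rcases n with _ | m
    · simp
    calc ((m + 1 : ℕ) : ℝ) * a ^ m * b ≤ (m + 1 : ℕ) * a ^ m * a := by gcongr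
      _ = (m + 1 : ℕ) * a ^ (m + 1) := by ring
      _ ≤ ((m + 1 : ℕ) + 1) * a ^ (m + 1) := by gcongr; linarith
  have := sub_nonneg.2 hfactor
  unfold wedgeChainVolume
  positivity

theorem wedgeChainSliceVolume_nonneg (ht : 0 ≤ t) (hta : t ≤ a) :
    0 ≤ wedgeChainSliceVolume n a t := by
  have ha : 0 ≤ a := ht.trans hta
  have := sub_nonneg.2 hta
  unfold wedgeChainSliceVolume
  positivity

theorem hasDerivAt_wedgeChainSliceVolume_fst (n : ℕ) (t s : ℝ) :
    HasDerivAt (fun s ↦ wedgeChainSliceVolume n s t) (wedgeChainVolume n s t) s := by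
  have h := ((((hasDerivAt_pow n s).mul_const (t ^ n)).mul
    ((hasDerivAt_id' s).sub_const t)).div_const ((n ! : ℝ) * (n + 1)!))
  refine h.congr_deriv ?_
  unfold wedgeChainVolume
  rcases n with _ | m
  · simp
  · simp only [Nat.add_sub_cancel]
    ring

theorem hasDerivAt_wedgeChainVolume_succ_snd (n : ℕ) (a t : ℝ) :
    HasDerivAt (fun t ↦ wedgeChainVolume (n + 1) a t) (wedgeChainSliceVolume n a t) t := by
  have h := (((hasDerivAt_pow (n + 1) t).mul (((hasDerivAt_id' t).const_mul
    (((n + 1 : ℕ) : ℝ) * a ^ n)).const_sub (((n + 1 : ℕ) + 1) * a ^ (n + 1)))).div_const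
      (((n + 1)! : ℝ) * (n + 1 + 1)!))
  refine h.congr_deriv ?_
  unfold wedgeChainSliceVolume
  rw [Nat.factorial_succ (n + 1), Nat.factorial_succ n]
  push_cast [Nat.add_sub_cancel]
  field_simp
  ring

theorem setLIntegral_wedgeChainVolume (n : ℕ) (hb : 0 ≤ b) (hba : b ≤ a) :
    ∫⁻ z in wedge ∩ Iic (a, b), ENNReal.ofReal (wedgeChainVolume n z.1 z.2) =
      ENNReal.ofReal (wedgeChainVolume (n + 1) a b) := by
  have hmeas : Measurable fun z : ℝ × ℝ ↦ ENNReal.ofReal (wedgeChainVolume n z.1 z.2) := by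
    unfold wedgeChainVolume
    fun_prop
  have hinner : ∀ t ∈ Icc 0 b, ∫⁻ s in Icc t a, ENNReal.ofReal (wedgeChainVolume n s t) =
      ENNReal.ofReal (wedgeChainSliceVolume n a t) := fun t ht ↦ by
    rw [setLIntegral_Icc_ofReal_eq_sub_of_hasDerivAt (ht.2.trans hba)
      (HasDerivAt.continuousOn fun s _ ↦ hasDerivAt_wedgeChainSliceVolume_fst n t s)
      (fun s _ ↦ hasDerivAt_wedgeChainSliceVolume_fst n t s)
      (fun s hs ↦ wedgeChainVolume_nonneg ht.1 hs.1.le)]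
    simp [wedgeChainSliceVolume]
  rw [setLIntegral_wedge_inter_Iic hmeas, setLIntegral_congr_fun measurableSet_Icc hinner,
    setLIntegral_Icc_ofReal_eq_sub_of_hasDerivAt hb
      (HasDerivAt.continuousOn fun t _ ↦ hasDerivAt_wedgeChainVolume_succ_snd n a t)
      (fun t _ ↦ hasDerivAt_wedgeChainVolume_succ_snd n a t)
      (fun t ht ↦ wedgeChainSliceVolume_nonneg ht.1.le (ht.2.le.trans hba))]
  simp [wedgeChainVolume]

end VolumePolynomials

theorem volume_chainsBelow_wedge (n : ℕ) {a b : ℝ} (hb : 0 ≤ b) (hba : b ≤ a) :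
    volume (chainsBelow wedge n (a, b)) = ENNReal.ofReal (wedgeChainVolume n a b) := by
  induction n generalizing a b with
  | zero => simp [chainsBelow_zero, wedgeChainVolume, volume_pi]
  | succ n ih =>
    have hind : EqOn (fun z ↦ volume (chainsBelow wedge n z))
        (fun z ↦ ENNReal.ofReal (wedgeChainVolume n z.1 z.2)) (wedge ∩ Iic (a, b)) :=
      fun z hz ↦ ih hz.1.1 hz.1.2
    calc volume (chainsBelow wedge (n + 1) (a, b))
      _ = ∫⁻ z in wedge ∩ Iic (a, b), volume (chainsBelow wedge n z) :=
        pi_chainsBelow_succ volume measurableSet_wedge n (a, b)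
      _ = ∫⁻ z in wedge ∩ Iic (a, b), ENNReal.ofReal (wedgeChainVolume n z.1 z.2) :=
        setLIntegral_congr_fun (measurableSet_wedge.inter measurableSet_Iic) hind
      _ = ENNReal.ofReal (wedgeChainVolume (n + 1) a b) := setLIntegral_wedgeChainVolume n hb hba

/-- The polytope `Λⁿ(x, y)`, in the coordinates `a = (x + y) / 2` and `b = (x - y) / 2`. -/
def lambdaPolytope (n : ℕ) (a b : ℝ) : Set ((Fin n → ℝ) × (Fin n → ℝ)) :=
  {p | Monotone p.1 ∧ Monotone p.2 ∧ (∀ i, 0 ≤ p.1 i ∧ p.1 i ≤ a) ∧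
    (∀ i, 0 ≤ p.2 i ∧ p.2 i ≤ b) ∧ ∀ i, p.2 i ≤ p.1 i}

theorem preimage_arrowProdEquivProdArrow_lambdaPolytope (n : ℕ) (a b : ℝ) :
    MeasurableEquiv.arrowProdEquivProdArrow ℝ ℝ (Fin n) ⁻¹' lambdaPolytope n a b =
      chainsBelow wedge n (a, b) := by
  ext q
  change (Monotone (Prod.fst ∘ q) ∧ Monotone (Prod.snd ∘ q) ∧ _) ↔ Monotone q ∧ _
  have hmono : Monotone q ↔ Monotone (Prod.fst ∘ q) ∧ Monotone (Prod.snd ∘ q) :=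
    ⟨fun h ↦ ⟨monotone_fst.comp h, monotone_snd.comp h⟩, fun h ↦ h.1.prodMk h.2⟩
  have hcoord (i : Fin n) : q i ∈ wedge ∩ Iic (a, b) ↔
      (0 ≤ (q i).1 ∧ (q i).1 ≤ a) ∧ (0 ≤ (q i).2 ∧ (q i).2 ≤ b) ∧ (q i).2 ≤ (q i).1 := by
    simp only [wedge, mem_inter_iff, mem_ofPred_eq, mem_Iic, Prod.le_def]
    constructor
    · rintro ⟨⟨h0, hle⟩, ha, hb⟩
      exact ⟨⟨h0.trans hle, ha⟩, ⟨h0, hb⟩, hle⟩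
    · rintro ⟨⟨-, ha⟩, ⟨h0, hb⟩, hle⟩
      exact ⟨⟨h0, hle⟩, ha, hb⟩
  simp only [hmono, hcoord, forall_and, and_assoc]
  rfl

theorem volume_lambdaPolytope (n : ℕ) {a b : ℝ} (hb : 0 ≤ b) (hba : b ≤ a) :
    volume (lambdaPolytope n a b) = ENNReal.ofReal (wedgeChainVolume n a b) := by
  rw [← (volume_measurePreserving_arrowProdEquivProdArrow ℝ ℝ (Fin n)).measure_preimage_equiv,
    preimage_arrowProdEquivProdArrow_lambdaPolytope, volume_chainsBelow_wedge n hb hba]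

theorem wedgeChainVolume_add_div_two_sub_div_two {n : ℕ} (hn : 1 ≤ n) (x y : ℝ) :
    wedgeChainVolume n ((x + y) / 2) ((x - y) / 2) =
      (x - y) ^ n * (x + y) ^ (n - 1) * (x + (2 * n + 1) * y) /
        (2 ^ (2 * n) * n ! * (n + 1)!) := by
  obtain ⟨m, rfl⟩ := Nat.exists_eq_add_of_le' hn
  simp only [wedgeChainVolume, Nat.add_sub_cancel, div_pow, pow_mul']
  push_cast
  field_simp
  ring

theorem volume_Lambda (n : ℕ) (hn : 1 ≤ n) (x y : ℝ) (hy : 0 ≤ y) (hxy : y ≤ x) :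
    volume {p : (Fin n → ℝ) × (Fin n → ℝ) |
      Monotone p.1 ∧ Monotone p.2 ∧
      (∀ i, 0 ≤ p.1 i ∧ p.1 i ≤ (x + y) / 2) ∧
      (∀ i, 0 ≤ p.2 i ∧ p.2 i ≤ (x - y) / 2) ∧
      (∀ i, p.2 i ≤ p.1 i)} =
    ENNReal.ofReal ((x - y) ^ n * (x + y) ^ (n - 1) * (x + (2 * n + 1) * y) /
      (2 ^ (2 * n) * n.factorial * (n + 1).factorial)) := by
  rw [← wedgeChainVolume_add_div_two_sub_div_two hn]
  exact volume_lambdaPolytope n (by linarith) (by linarith)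
end

section
/- For real numbers x, y with 0 ≤ y ≤ x and 0 < x + y, the sum Σ_{n=0}^∞ (x−y)ⁿ (x+y)^{n−1} (x + (2n+1)y) / (2^{2n} n! (n+1)!) equals I₀(√(x²−y²)) − ((x−y)/(x+y)) I₂(√(x²−y²)). -/
/-- The modified Bessel function of the first kind of integer order `ν`. -/
noncomputable def besselI (ν : ℕ) (z : ℝ) : ℝ :=
  ∑' n : ℕ, (z / 2) ^ (2 * n + ν) / ((n.factorial : ℝ) * ((n + ν).factorial : ℝ))

open scoped Nat

theorem summable_besselI (ν : ℕ) (z : ℝ) :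
    Summable fun n : ℕ => (z / 2) ^ (2 * n + ν) / ((n ! : ℝ) * ((n + ν)! : ℝ)) := by
  refine .of_norm_bounded
    ((Real.summable_pow_div_factorial ((z / 2) ^ 2)).mul_left (|z / 2| ^ ν)) fun n => ?_
  have one_le_factorial : (1 : ℝ) ≤ (n + ν)! := mod_cast (n + ν).factorial_pos
  calc ‖(z / 2) ^ (2 * n + ν) / ((n ! : ℝ) * ((n + ν)! : ℝ))‖
      = |z / 2| ^ ν * (((z / 2) ^ 2) ^ n / n !) / (n + ν)! := by
        rw [norm_div, norm_pow, Real.norm_eq_abs, Real.norm_of_nonneg (by positivity), pow_add,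
          pow_mul, sq_abs]
        ring
    _ ≤ |z / 2| ^ ν * (((z / 2) ^ 2) ^ n / n !) :=
        div_le_self (by positivity) one_le_factorial

theorem hasSum_besselI (ν : ℕ) (z : ℝ) :
    HasSum (fun n : ℕ => (z / 2) ^ (2 * n + ν) / ((n ! : ℝ) * ((n + ν)! : ℝ))) (besselI ν z) :=
  (summable_besselI ν z).hasSum

theorem hasSum_nat_mul_besselI_add_two (ν : ℕ) (z : ℝ) :
    HasSum (fun n : ℕ => n * (z / 2) ^ (2 * n + ν) / ((n ! : ℝ) * ((n + ν + 1)! : ℝ)))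
      (besselI (ν + 2) z) := by
  -- The term at `n = 0` vanishes; the term at `n + 1` is the `n`-th term of `besselI (ν + 2) z`.
  rw [← hasSum_nat_add_iff' 1]
  simp only [Finset.sum_range_one, Nat.cast_zero, zero_mul, zero_div, sub_zero]
  refine (hasSum_besselI (ν + 2) z).congr_fun fun n => ?_
  rw [show n + 1 + ν + 1 = n + (ν + 2) by ring, show 2 * (n + 1) + ν = 2 * n + (ν + 2) by ring,
    Nat.factorial_succ n]
  push_cast
  field_simp

theorem volume_term_eq_bessel_term_sub {K : Type*} [Field K] [CharZero K] {x y z : K}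
    (hxy : x + y ≠ 0) (hz : z ^ 2 = x ^ 2 - y ^ 2) (n : ℕ) :
    (x - y) ^ n * (x + y) ^ ((n : ℤ) - 1) * (x + (2 * n + 1) * y) /
        (2 ^ (2 * n) * (n ! : K) * ((n + 1)! : K)) =
      (z / 2) ^ (2 * n) / ((n ! : K) * (n ! : K)) -
        (x - y) / (x + y) * (n * (z / 2) ^ (2 * n) / ((n ! : K) * ((n + 1)! : K))) := by
  have hpow : (z / 2) ^ (2 * n) = (x - y) ^ n * (x + y) ^ n / 2 ^ (2 * n) := by
    rw [div_pow, pow_mul z, hz, ← mul_pow]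
    ring
  have hlin : x + (2 * n + 1) * y = (n + 1) * (x + y) - n * (x - y) := by ring
  rw [hpow, hlin, zpow_sub_one₀ hxy, zpow_natCast, Nat.factorial_succ]
  push_cast
  field_simp

theorem sum_volumes_eq_catalan_general {x y z : ℝ} (hxy : x + y ≠ 0)
    (hz : z ^ 2 = x ^ 2 - y ^ 2) :
    HasSum (fun n : ℕ => (x - y) ^ n * (x + y) ^ ((n : ℤ) - 1) * (x + (2 * n + 1) * y) /
        (2 ^ (2 * n) * (n ! : ℝ) * ((n + 1)! : ℝ)))
      (besselI 0 z - (x - y) / (x + y) * besselI 2 z) :=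
  ((hasSum_besselI 0 z).sub
    ((hasSum_nat_mul_besselI_add_two 0 z).mul_left ((x - y) / (x + y)))).congr_fun
      (volume_term_eq_bessel_term_sub hxy hz)

theorem sum_volumes_eq_catalan (x y : ℝ) (hy : 0 ≤ y) (hxy : y ≤ x) (hpos : 0 < x + y) :
    ∑' n : ℕ, (x - y) ^ n * (x + y) ^ ((n : ℤ) - 1) * (x + (2 * n + 1) * y) /
        (2 ^ (2 * n) * (n.factorial : ℝ) * ((n + 1).factorial : ℝ)) =
      besselI 0 (Real.sqrt (x ^ 2 - y ^ 2)) -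
        ((x - y) / (x + y)) * besselI 2 (Real.sqrt (x ^ 2 - y ^ 2)) :=
  (sum_volumes_eq_catalan_general hpos.ne' (Real.sq_sqrt (by nlinarith))).tsum_eq
end

section
/- For real numbers x, y with 0 ≤ y ≤ x, the continuous Catalan numbers satisfy the integral recursion C(x,y) = 1 + ∫_{b=0}^{(x−y)/2} ∫_{a=0}^{(x+y)/2 − b} C(a+2b, a) da db. -/
/-- The continuous Catalan numbers `C(x,y)` (with the convention that the quotient
term vanishes when `x + y = 0`, since division by zero is zero in Lean). -/
noncomputable def contCatalan (x y : ℝ) : ℝ :=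
  besselI 0 (Real.sqrt (x ^ 2 - y ^ 2)) -
    ((x - y) / (x + y)) * besselI 2 (Real.sqrt (x ^ 2 - y ^ 2))

/-!
In the light-cone coordinates `p = (x + y) / 2`, `q = (x - y) / 2` the square roots and the
quotient disappear: with `B ν t = ∑ tⁿ / (n! (n + ν)!)`, the continuous Catalan number `C(x, y)` is
the entire function `D(p, q) = B 0 (pq) - q² B 2 (pq)`. From `(B ν)' = B (ν + 1)` and
`B ν t = (ν + 1) B (ν + 1) t + t B (ν + 2) t` it follows that `∂D/∂q = E` and `∂E/∂p = D`, where
`E(p, q) = (p - q) B 1 (pq)`. As `E` vanishes on `p = q` and `D` equals `1` on `q = 0`, integrating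
twice gives the recursion.
-/

section OrderedField

variable {𝕜 : Type*} [Field 𝕜] [LinearOrder 𝕜] [IsStrictOrderedRing 𝕜] {a b c s : 𝕜}

lemma mul_pos_of_mem_uIcc (ha : 0 < a * c) (hb : 0 < b * c) (hs : s ∈ Set.uIcc a b) :
    0 < s * c := by
  have mul_mem : s * c ∈ Set.uIcc (a * c) (b * c) :=
    Set.image_mul_const_uIcc c a b ▸ Set.mem_image_of_mem (· * c) hs
  exact (lt_inf_iff.mpr ⟨ha, hb⟩).trans_le mul_mem.1

lemma eq_zero_or_mul_pos_of_mem_uIcc_zero (hb : b = 0 ∨ 0 < c * b) (hs : s ∈ Set.uIcc 0 b) :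
    s = 0 ∨ 0 < c * s := by
  rcases hb with rfl | hb
  · exact .inl (by simpa only [Set.uIcc_self, Set.mem_singleton_iff] using hs)
  have mul_mem : c * s ∈ Set.uIcc (c * 0) (c * b) :=
    Set.image_const_mul_uIcc c 0 b ▸ Set.mem_image_of_mem (c * ·) hs
  rw [mul_zero, Set.uIcc_of_le hb.le] at mul_mem
  exact or_iff_not_imp_left.mpr fun hs_ne ↦
    mul_mem.1.lt_of_ne' (mul_ne_zero (left_ne_zero_of_mul hb.ne') hs_ne)

end OrderedField

section PowerSeries

open FormalMultilinearSeries

variable {𝕜 : Type*} [NontriviallyNormedField 𝕜] [CompleteSpace 𝕜]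

lemma summable_mul_pow_of_enorm_lt_radius {c : ℕ → 𝕜} {z : 𝕜}
    (hz : ‖z‖ₑ < (ofScalars 𝕜 c).radius) : Summable fun n ↦ c n * z ^ n := by
  simpa only [ofScalars_apply_eq, smul_eq_mul] using
    (ofScalars 𝕜 c).summable (x := z) (by simpa using hz)

lemma hasDerivAt_tsum_mul_pow {c : ℕ → 𝕜} {z : 𝕜} (hz : ‖z‖ₑ < (ofScalars 𝕜 c).radius) :
    HasDerivAt (fun w ↦ ∑' n, c n * w ^ n) (∑' n : ℕ, (n + 1) * c (n + 1) * z ^ n) z := by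
  set p := ofScalars 𝕜 c with hp
  have sum_eq : p.sum = fun w ↦ ∑' n, c n * w ^ n := by
    funext w
    simp only [FormalMultilinearSeries.sum, hp, ofScalars_apply_eq, smul_eq_mul]
  have summable_deriv : Summable fun n ↦ p.derivSeries n fun _ ↦ z :=
    p.derivSeries.summable (by simpa using hz.trans_le p.radius_le_radius_derivSeries)
  have deriv_eq : p.derivSeries.sum z 1 = ∑' n : ℕ, (n + 1) * c (n + 1) * z ^ n := by
    refine ((ContinuousLinearMap.apply 𝕜 𝕜 1).map_tsum summable_deriv).trans
      (tsum_congr fun n ↦ ?_)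
    rw [ContinuousLinearMap.apply_apply, apply_eq_pow_smul_coeff, _root_.smul_apply,
      derivSeries_coeff_one, coeff_ofScalars]
    simp only [nsmul_eq_mul, smul_eq_mul, Nat.cast_add, Nat.cast_one, mul_comm]
  rw [← sum_eq, ← deriv_eq]
  exact (FormalMultilinearSeries.hasFDerivAt_sum hz).hasDerivAt

end PowerSeries

section BesselClifford

open scoped Nat

/-- The Taylor coefficients at `0` of the Bessel–Clifford function of order `ν`. -/
noncomputable def besselCliffordCoeff (ν n : ℕ) : ℝ := ((n ! : ℝ) * ((n + ν)! : ℝ))⁻¹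

/-- The Bessel–Clifford function `∑ tⁿ / (n! (n + ν)!)` of integer order `ν`, an entire function
that absorbs the branch point of `√t` in `I_ν (2√t) = t ^ (ν / 2) * besselClifford ν t`. -/
noncomputable def besselClifford (ν : ℕ) (t : ℝ) : ℝ := ∑' n, besselCliffordCoeff ν n * t ^ n

lemma besselCliffordCoeff_zero_right (ν : ℕ) :
    besselCliffordCoeff ν 0 = (ν + 1) * besselCliffordCoeff (ν + 1) 0 := by
  simp only [besselCliffordCoeff, zero_add, Nat.factorial_succ, Nat.factorial_zero]
  push_cast
  field_simp

lemma succ_mul_besselCliffordCoeff_succ (ν n : ℕ) :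
    (n + 1) * besselCliffordCoeff ν (n + 1) = besselCliffordCoeff (ν + 1) n := by
  rw [besselCliffordCoeff, besselCliffordCoeff, add_right_comm n 1 ν, ← add_assoc,
    Nat.factorial_succ n]
  push_cast
  field_simp

lemma besselCliffordCoeff_succ_right (ν n : ℕ) :
    besselCliffordCoeff ν (n + 1) =
      (ν + 1) * besselCliffordCoeff (ν + 1) (n + 1) + besselCliffordCoeff (ν + 2) n := by
  rw [← succ_mul_besselCliffordCoeff_succ (ν + 1) n, besselCliffordCoeff, besselCliffordCoeff,
    ← add_assoc (n + 1), Nat.factorial_succ (n + 1 + ν)]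
  push_cast
  field_simp
  ring

lemma radius_ofScalars_besselCliffordCoeff (ν : ℕ) :
    (FormalMultilinearSeries.ofScalars ℝ (besselCliffordCoeff ν)).radius = ⊤ := by
  refine FormalMultilinearSeries.radius_eq_top_of_summable_norm _ fun r ↦ ?_
  refine .of_nonneg_of_le (fun n ↦ by positivity) (fun n ↦ ?_) (Real.summable_pow_div_factorial r)
  have coeff_le : besselCliffordCoeff ν n ≤ (n ! : ℝ)⁻¹ := by
    have one_le : (1 : ℝ) ≤ ((n + ν)! : ℝ) := mod_cast (n + ν).factorial_pos
    exact inv_anti₀ (by positivity) (le_mul_of_one_le_right (by positivity) one_le)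
  have coeff_nonneg : 0 ≤ besselCliffordCoeff ν n := by unfold besselCliffordCoeff; positivity
  rw [FormalMultilinearSeries.ofScalars_norm, Real.norm_of_nonneg coeff_nonneg, div_eq_inv_mul]
  gcongr

lemma summable_besselClifford (ν : ℕ) (t : ℝ) :
    Summable fun n ↦ besselCliffordCoeff ν n * t ^ n :=
  summable_mul_pow_of_enorm_lt_radius (by simp [radius_ofScalars_besselCliffordCoeff])

lemma hasDerivAt_besselClifford (ν : ℕ) (t : ℝ) :
    HasDerivAt (besselClifford ν) (besselClifford (ν + 1) t) t := by
  simpa only [succ_mul_besselCliffordCoeff_succ] using!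
    hasDerivAt_tsum_mul_pow (c := besselCliffordCoeff ν) (z := t)
      (by simp [radius_ofScalars_besselCliffordCoeff])

@[fun_prop]
lemma continuous_besselClifford (ν : ℕ) : Continuous (besselClifford ν) :=
  continuous_iff_continuousAt.mpr fun t ↦ (hasDerivAt_besselClifford ν t).continuousAt

lemma besselClifford_eq_add (ν : ℕ) (t : ℝ) :
    besselClifford ν t =
      (ν + 1) * besselClifford (ν + 1) t + t * besselClifford (ν + 2) t := by
  have tail_summable :=
    (summable_nat_add_iff 1).mpr (summable_besselClifford (ν + 1) t) |>.mul_left (ν + 1 : ℝ)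
  have shift_summable := (summable_besselClifford (ν + 2) t).mul_left t
  rw [besselClifford, besselClifford, besselClifford,
    (summable_besselClifford ν t).tsum_eq_zero_add,
    (summable_besselClifford (ν + 1) t).tsum_eq_zero_add, mul_add, add_assoc, ← tsum_mul_left,
    ← tsum_mul_left, ← tail_summable.tsum_add shift_summable]
  congr 1
  · rw [besselCliffordCoeff_zero_right, mul_assoc]
  · refine tsum_congr fun n ↦ ?_
    rw [besselCliffordCoeff_succ_right]
    ring

lemma besselClifford_zero_zero : besselClifford 0 0 = 1 := by
  rw [besselClifford, tsum_eq_single 0 fun n hn ↦ by simp [hn]]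
  simp [besselCliffordCoeff]

lemma besselI_eq_pow_mul_besselClifford (ν : ℕ) (z : ℝ) :
    besselI ν z = (z / 2) ^ ν * besselClifford ν ((z / 2) ^ 2) := by
  rw [besselI, besselClifford, ← tsum_mul_left]
  refine tsum_congr fun n ↦ ?_
  rw [besselCliffordCoeff, ← pow_mul, pow_add]
  ring

end BesselClifford

/-- The entire function of the light-cone coordinates `p` and `q` that agrees with the continuous
Catalan number `C(p + q, p - q)` when `p * q` is positive or `q` vanishes. -/
noncomputable def lightConeCatalan (p q : ℝ) : ℝ :=
  besselClifford 0 (p * q) - q ^ 2 * besselClifford 2 (p * q)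

section LightCone

variable {p q : ℝ}

lemma lightConeCatalan_zero_right (p : ℝ) : lightConeCatalan p 0 = 1 := by
  simp [lightConeCatalan, besselClifford_zero_zero]

lemma contCatalan_add_sub (h : q = 0 ∨ 0 < p * q) :
    contCatalan (p + q) (p - q) = lightConeCatalan p q := by
  have sq_sub_sq_eq : (p + q) ^ 2 - (p - q) ^ 2 = 4 * (p * q) := by ring
  have pq_nonneg : 0 ≤ p * q := h.elim (fun hq ↦ by simp [hq]) le_of_lt
  have half_sqrt_sq : (√((p + q) ^ 2 - (p - q) ^ 2) / 2) ^ 2 = p * q := by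
    rw [div_pow, Real.sq_sqrt (by linarith), sq_sub_sq_eq]
    ring
  have quotient_mul : (p + q - (p - q)) / (p + q + (p - q)) * (p * q) = q ^ 2 := by
    rcases h with rfl | hpq
    · simp
    · have p_ne_zero : p ≠ 0 := left_ne_zero_of_mul hpq.ne'
      rw [show p + q - (p - q) = 2 * q by ring, show p + q + (p - q) = 2 * p by ring]
      field_simp
  rw [contCatalan, besselI_eq_pow_mul_besselClifford, besselI_eq_pow_mul_besselClifford,
    half_sqrt_sq, pow_zero, one_mul, ← mul_assoc, quotient_mul, lightConeCatalan]

lemma hasDerivAt_lightConeCatalan_right (p q : ℝ) :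
    HasDerivAt (lightConeCatalan p) ((p - q) * besselClifford 1 (p * q)) q := by
  have hasDerivAt_comp (ν : ℕ) : HasDerivAt (fun r ↦ besselClifford ν (p * r))
      (besselClifford (ν + 1) (p * q) * p) q :=
    (hasDerivAt_besselClifford ν (p * q)).comp q (hasDerivAt_const_mul p)
  refine ((hasDerivAt_comp 0).sub ((hasDerivAt_pow 2 q).mul (hasDerivAt_comp 2))).congr_deriv ?_
  have recurrence : besselClifford 1 (p * q) =
      2 * besselClifford 2 (p * q) + p * q * besselClifford 3 (p * q) := by
    simpa only [Nat.cast_one, one_add_one_eq_two] using besselClifford_eq_add 1 (p * q)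
  simp only [zero_add, Nat.cast_ofNat, Nat.add_one_sub_one, pow_one, Nat.reduceAdd]
  linear_combination q * recurrence

lemma hasDerivAt_sub_mul_besselClifford_one (p q : ℝ) :
    HasDerivAt (fun s ↦ (s - q) * besselClifford 1 (s * q)) (lightConeCatalan p q) p := by
  have hasDerivAt_comp : HasDerivAt (fun s ↦ besselClifford 1 (s * q))
      (besselClifford 2 (p * q) * q) p :=
    (hasDerivAt_besselClifford 1 (p * q)).comp (h₂ := besselClifford 1) p (hasDerivAt_mul_const q)
  refine (((hasDerivAt_id p).sub_const q).mul hasDerivAt_comp).congr_deriv ?_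
  have recurrence : besselClifford 0 (p * q) =
      besselClifford 1 (p * q) + p * q * besselClifford 2 (p * q) := by
    simpa only [CharP.cast_eq_zero, zero_add, one_mul] using besselClifford_eq_add 0 (p * q)
  rw [lightConeCatalan, id_eq]
  linear_combination -recurrence

lemma integral_lightConeCatalan_left (p q : ℝ) :
    ∫ s in q..p, lightConeCatalan s q = (p - q) * besselClifford 1 (p * q) := by
  have integrable : IntervalIntegrable (lightConeCatalan · q) MeasureTheory.volume q p := by
    refine Continuous.intervalIntegrable ?_ q p
    unfold lightConeCatalan
    fun_prop
  rw [intervalIntegral.integral_eq_sub_of_hasDerivAt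
    (fun s _ ↦ hasDerivAt_sub_mul_besselClifford_one s q) integrable, sub_self, zero_mul, sub_zero]

lemma lightConeCatalan_eq_one_add_integral (p q : ℝ) :
    lightConeCatalan p q = 1 + ∫ r in (0 : ℝ)..q, ∫ s in r..p, lightConeCatalan s r := by
  have integrable : IntervalIntegrable (fun r ↦ (p - r) * besselClifford 1 (p * r))
      MeasureTheory.volume 0 q := Continuous.intervalIntegrable (by fun_prop) 0 q
  simp only [integral_lightConeCatalan_left]
  rw [intervalIntegral.integral_eq_sub_of_hasDerivAt
    (fun r _ ↦ hasDerivAt_lightConeCatalan_right p r) integrable, lightConeCatalan_zero_right,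
    add_sub_cancel]

lemma integral_contCatalan_eq_integral_lightConeCatalan (h : q = 0 ∨ 0 < p * q) :
    ∫ a in (0 : ℝ)..(p - q), contCatalan (a + 2 * q) a = ∫ s in q..p, lightConeCatalan s q := by
  have segment {s : ℝ} (hs : s ∈ Set.uIcc q p) : q = 0 ∨ 0 < s * q :=
    h.imp_right fun hpq ↦
      mul_pos_of_mem_uIcc (mul_self_pos.mpr (right_ne_zero_of_mul hpq.ne')) hpq hs
  calc ∫ a in (0 : ℝ)..(p - q), contCatalan (a + 2 * q) a
      = ∫ s in q..p, contCatalan (s + q) (s - q) := by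
        rw [← sub_self q, ← intervalIntegral.integral_comp_sub_right
          (fun a ↦ contCatalan (a + 2 * q) a)]
        simp only [two_mul, sub_add_add_cancel]
    _ = ∫ s in q..p, lightConeCatalan s q :=
        intervalIntegral.integral_congr fun s hs ↦ contCatalan_add_sub (segment hs)

end LightCone

theorem contCatalan_recursion_general (x y : ℝ) (h : y = x ∨ |y| < |x|) :
    contCatalan x y =
      1 + ∫ b in (0 : ℝ)..(x - y) / 2, ∫ a in (0 : ℝ)..((x + y) / 2 - b),
        contCatalan (a + 2 * b) a := by
  obtain ⟨p, q, rfl, rfl⟩ : ∃ p q, x = p + q ∧ y = p - q :=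
    ⟨(x + y) / 2, (x - y) / 2, by ring, by ring⟩
  have hpq : q = 0 ∨ 0 < p * q := by
    refine h.imp (fun heq ↦ by linarith) fun hlt ↦ ?_
    linarith [sq_lt_sq.mpr hlt]
  rw [show (p + q - (p - q)) / 2 = q by ring, show (p + q + (p - q)) / 2 = p by ring,
    contCatalan_add_sub hpq, lightConeCatalan_eq_one_add_integral p q]
  congr 1
  exact intervalIntegral.integral_congr fun b hb ↦
    (integral_contCatalan_eq_integral_lightConeCatalan
      (eq_zero_or_mul_pos_of_mem_uIcc_zero hpq hb)).symm

theorem contCatalan_recursion (x y : ℝ) (hy : 0 ≤ y) (hxy : y ≤ x) :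
    contCatalan x y =
      1 + ∫ b in (0 : ℝ)..(x - y) / 2, ∫ a in (0 : ℝ)..((x + y) / 2 - b),
        contCatalan (a + 2 * b) a :=
  contCatalan_recursion_general x y <|
    hxy.eq_or_lt.imp_right fun hlt ↦ by
      rwa [abs_of_nonneg hy, abs_of_nonneg (hy.trans hxy)]
end

section
/- For every real number x with 0 ≤ x < 1/4, one has ∫_{0}^{∞} C(2√x · u) e^{−u} du = 2 / (1 + √(1 − 4x)); equivalently, this integral equals the value Σ_{n=0}^∞ Cₙ xⁿ of the Catalan number generating function, where Cₙ is the n-th Catalan number. -/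
/-- The one-variable continuous Catalan function `C(x) = 2 I₁(x)/x`. -/
noncomputable def contCatalanFn (x : ℝ) : ℝ :=
  ∑' n : ℕ, (x / 2) ^ (2 * n) / ((n.factorial : ℝ) * ((n + 1).factorial : ℝ))

/-!
Since `∫₀^∞ u ^ (2n) e⁻ᵘ du = (2n)!` and `(2n)! / (n! (n + 1)!)` is the `n`-th Catalan number,
integrating the series of `C (2tu) e⁻ᵘ` term by term gives the Catalan generating function `S`
at `x = t²`. The Catalan recurrence reads `S = 1 + x S²`, that is, `(1 - 2xS)² = 1 - 4x`. The
partial sums of `S` at `1 / 4` telescope and are at most `2`, so for `|x| ≤ 1 / 4` the number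
`1 - 2xS` is nonnegative, which selects the branch `1 - 2xS = √(1 - 4x)`.
-/

open MeasureTheory
open scoped Nat

theorem catalan_mul_factorial_mul_factorial_succ (n : ℕ) :
    catalan n * (n ! * (n + 1)!) = (2 * n)! := by
  calc catalan n * (n ! * (n + 1)!)
      = ((n + 1) * catalan n) * n ! * n ! := by rw [Nat.factorial_succ]; ring
    _ = (2 * n).choose n * n ! * n ! := by
        rw [succ_mul_catalan_eq_centralBinom, Nat.centralBinom_eq_two_mul_choose]
    _ = (2 * n)! := by rw [two_mul, Nat.add_choose_mul_factorial_mul_factorial]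

theorem centralBinom_succ_eq_mul_catalan (n : ℕ) :
    (n + 1).centralBinom = 2 * (2 * n + 1) * catalan n := by
  refine Nat.eq_of_mul_eq_mul_left (Nat.add_one_pos n) ?_
  rw [Nat.succ_mul_centralBinom_succ, ← succ_mul_catalan_eq_centralBinom]
  ring

theorem sum_range_catalan_div_four_pow {K : Type*} [Field K] [CharZero K] (N : ℕ) :
    ∑ n ∈ Finset.range N, (catalan n : K) / 4 ^ n = 2 - 2 * N.centralBinom / 4 ^ N := by
  induction N with
  | zero => simp
  | succ N ih =>
    rw [Finset.sum_range_succ, ih, centralBinom_succ_eq_mul_catalan,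
      ← succ_mul_catalan_eq_centralBinom]
    push_cast
    field

theorem tsum_catalan_mul_pow_eq_one_add {R : Type*} [NormedCommRing R] [CompleteSpace R] {x : R}
    (hx : Summable fun n ↦ ‖(catalan n : R) * x ^ n‖) :
    ∑' n, (catalan n : R) * x ^ n = 1 + x * (∑' n, (catalan n : R) * x ^ n) ^ 2 := by
  have cauchy_coeff (n : ℕ) : (catalan (n + 1) : R) * x ^ (n + 1) =
      x * ∑ p ∈ Finset.HasAntidiagonal.antidiagonal n,
        catalan p.1 * x ^ p.1 * (catalan p.2 * x ^ p.2) := by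
    rw [catalan_succ', Nat.cast_sum, Finset.sum_mul, Finset.mul_sum]
    refine Finset.sum_congr rfl fun p hp ↦ ?_
    rw [← Finset.HasAntidiagonal.mem_antidiagonal.mp hp]
    push_cast
    ring
  rw [sq, tsum_mul_tsum_eq_tsum_sum_antidiagonal_of_summable_norm hx hx,
    ← (summable_norm_sum_mul_antidiagonal_of_summable_norm hx hx).of_norm.tsum_mul_left,
    hx.of_norm.tsum_eq_zero_add]
  simp only [cauchy_coeff, catalan_zero, Nat.cast_one, pow_zero, mul_one]

section

variable {𝕜 : Type*} [RCLike 𝕜] {x : 𝕜}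

theorem sum_range_norm_catalan_mul_pow_le_two (hx : ‖x‖ ≤ 1 / 4) (N : ℕ) :
    ∑ n ∈ Finset.range N, ‖(catalan n : 𝕜) * x ^ n‖ ≤ 2 := by
  calc ∑ n ∈ Finset.range N, ‖(catalan n : 𝕜) * x ^ n‖
      = ∑ n ∈ Finset.range N, (catalan n : ℝ) * ‖x‖ ^ n := by
        simp only [norm_mul, RCLike.norm_natCast, norm_pow]
    _ ≤ ∑ n ∈ Finset.range N, (catalan n : ℝ) * (1 / 4) ^ n := by gcongr
    _ = 2 - 2 * N.centralBinom / 4 ^ N := by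
        simp only [one_div, inv_pow, ← div_eq_mul_inv, sum_range_catalan_div_four_pow]
    _ ≤ 2 := sub_le_self _ (by positivity)

theorem summable_norm_catalan_mul_pow (hx : ‖x‖ ≤ 1 / 4) :
    Summable fun n ↦ ‖(catalan n : 𝕜) * x ^ n‖ :=
  summable_of_sum_range_le (fun _ ↦ norm_nonneg _) (sum_range_norm_catalan_mul_pow_le_two hx)

theorem norm_tsum_catalan_mul_pow_le_two (hx : ‖x‖ ≤ 1 / 4) :
    ‖∑' n, (catalan n : 𝕜) * x ^ n‖ ≤ 2 := by
  calc ‖∑' n, (catalan n : 𝕜) * x ^ n‖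
      ≤ ∑' n, ‖(catalan n : 𝕜) * x ^ n‖ :=
        norm_tsum_le_tsum_norm (summable_norm_catalan_mul_pow hx)
    _ ≤ 2 :=
        (summable_norm_catalan_mul_pow hx).tsum_le_of_sum_range_le
          (sum_range_norm_catalan_mul_pow_le_two hx)

end

theorem tsum_catalan_mul_pow {x : ℝ} (hx : |x| ≤ 1 / 4) :
    ∑' n, (catalan n : ℝ) * x ^ n = 2 / (1 + √(1 - 4 * x)) := by
  rw [← Real.norm_eq_abs] at hx
  have summable_norm := summable_norm_catalan_mul_pow hx
  have quadratic := tsum_catalan_mul_pow_eq_one_add summable_norm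
  have norm_le := norm_tsum_catalan_mul_pow_le_two hx
  generalize ∑' n, (catalan n : ℝ) * x ^ n = S at quadratic norm_le ⊢
  have mul_le : x * S ≤ 1 / 2 := by
    calc x * S ≤ ‖x‖ * ‖S‖ := (Real.le_norm_self _).trans_eq (norm_mul x S)
      _ ≤ 1 / 4 * 2 := by gcongr
      _ = 1 / 2 := by norm_num
  have sqrt_eq : √(1 - 4 * x) = 1 - 2 * x * S := by
    rw [show 1 - 4 * x = (1 - 2 * x * S) ^ 2 by linear_combination 4 * x * quadratic]
    exact Real.sqrt_sq (by linarith)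
  have denom_pos : 0 < 1 + √(1 - 4 * x) := by positivity
  rw [eq_div_iff denom_pos.ne', sqrt_eq]
  linear_combination 2 * quadratic

theorem integrableOn_pow_mul_exp_neg (n : ℕ) :
    IntegrableOn (fun u : ℝ ↦ u ^ n * Real.exp (-u)) (Set.Ioi 0) := by
  simpa [mul_comm] using Real.GammaIntegral_convergent (s := n + 1) (by positivity)

theorem integral_pow_mul_exp_neg (n : ℕ) :
    ∫ u in Set.Ioi (0 : ℝ), u ^ n * Real.exp (-u) = n ! := by
  rw [← Real.Gamma_nat_eq_factorial, Real.Gamma_eq_integral (by positivity)]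
  simp [mul_comm]

theorem hasSum_integral_tsum_mul_pow_mul_exp_neg {ι : Type*} [Countable ι] {a : ι → ℝ} {k : ι → ℕ}
    (h : Summable fun i ↦ a i * (k i)!) :
    HasSum (fun i ↦ a i * (k i)!)
      (∫ u in Set.Ioi (0 : ℝ), (∑' i, a i * u ^ k i) * Real.exp (-u)) := by
  have integral_term (c : ℝ) (n : ℕ) :
      ∫ u in Set.Ioi (0 : ℝ), c * (u ^ n * Real.exp (-u)) = c * n ! := by
    rw [integral_const_mul, integral_pow_mul_exp_neg]
  have integral_norm_term (i : ι) :
      ∫ u in Set.Ioi (0 : ℝ), ‖a i * (u ^ k i * Real.exp (-u))‖ = |a i * (k i)!| := by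
    rw [abs_mul, Nat.abs_cast, ← integral_term]
    refine setIntegral_congr_fun measurableSet_Ioi fun u (hu : 0 < u) ↦ ?_
    rw [norm_mul, Real.norm_eq_abs, Real.norm_of_nonneg (by positivity)]
  have key := hasSum_integral_of_summable_integral_norm
    (F := fun i u ↦ a i * (u ^ k i * Real.exp (-u)))
    (fun i ↦ (integrableOn_pow_mul_exp_neg (k i)).const_mul (a i))
    (by simpa only [integral_norm_term] using h.abs)
  simp only [integral_term] at key
  simpa only [← mul_assoc, tsum_mul_right] using key

theorem contCatalanFn_two_mul_mul (t u : ℝ) :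
    contCatalanFn (2 * t * u) = ∑' n : ℕ, (t ^ 2) ^ n / (n ! * (n + 1)!) * u ^ (2 * n) := by
  refine tsum_congr fun n ↦ ?_
  rw [mul_assoc, mul_div_cancel_left₀ _ two_ne_zero, mul_pow, pow_mul t]
  ring

theorem hasSum_integral_contCatalanFn_mul_exp_neg {t : ℝ} (ht : t ^ 2 ≤ 1 / 4) :
    HasSum (fun n ↦ (catalan n : ℝ) * (t ^ 2) ^ n)
      (∫ u in Set.Ioi (0 : ℝ), contCatalanFn (2 * t * u) * Real.exp (-u)) := by
  have coeff_mul_factorial (n : ℕ) :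
      (t ^ 2) ^ n / (n ! * (n + 1)!) * (2 * n)! = catalan n * (t ^ 2) ^ n := by
    rw [← catalan_mul_factorial_mul_factorial_succ]
    push_cast
    field
  have summable_catalan : Summable fun n ↦ (catalan n : ℝ) * (t ^ 2) ^ n := by
    rw [← Real.norm_of_nonneg (sq_nonneg t)] at ht
    exact (summable_norm_catalan_mul_pow ht).of_norm
  simp only [← coeff_mul_factorial] at summable_catalan
  simpa only [coeff_mul_factorial, ← contCatalanFn_two_mul_mul] using
    hasSum_integral_tsum_mul_pow_mul_exp_neg summable_catalan

theorem laplace_contCatalanFn_eq_catalan_gf_general (x : ℝ) (hx : 0 ≤ x) (hx' : x ≤ 1 / 4) :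
    (∫ u in Set.Ioi (0 : ℝ), contCatalanFn (2 * √x * u) * Real.exp (-u)) = 2 / (1 + √(1 - 4 * x)) ∧
      (∫ u in Set.Ioi (0 : ℝ), contCatalanFn (2 * √x * u) * Real.exp (-u)) =
        ∑' n : ℕ, (catalan n : ℝ) * x ^ n := by
  have sq_sqrt : √x ^ 2 = x := Real.sq_sqrt hx
  have hasSum_integral := hasSum_integral_contCatalanFn_mul_exp_neg (sq_sqrt.trans_le hx')
  rw [sq_sqrt] at hasSum_integral
  rw [← hasSum_integral.tsum_eq]
  exact ⟨tsum_catalan_mul_pow (by rwa [abs_of_nonneg hx]), rfl⟩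

theorem laplace_contCatalanFn_eq_catalan_gf (x : ℝ) (hx : 0 ≤ x) (hx' : x < 1 / 4) :
    (∫ u in Set.Ioi (0 : ℝ), contCatalanFn (2 * Real.sqrt x * u) * Real.exp (-u)) =
        2 / (1 + Real.sqrt (1 - 4 * x)) ∧
      (∫ u in Set.Ioi (0 : ℝ), contCatalanFn (2 * Real.sqrt x * u) * Real.exp (-u)) =
        ∑' n : ℕ, (catalan n : ℝ) * x ^ n :=
  laplace_contCatalanFn_eq_catalan_gf_general x hx hx'.le
end

section
/- For real numbers x, y with 0 ≤ y ≤ x and 0 < x + y, the continuous Catalan numbers admit the integral representation C(x,y) = (1/π) ∫_{0}^{π} e^{x cos t} [ cos(y sin t) − ((x−y)/(x+y))² cos(y sin t − 2t) ] dt. -/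
/-!
Write `a = (x + y) / 2` and `b = (x - y) / 2`. Then `exp (x cos t) * cos (y sin t - ν t)` is the
real part of `exp (a e^{it}) * exp (b e^{-it}) * e^{-iνt}`. Expanding both exponentials writes it as
the double series with terms `a ^ m / m! * (b ^ n / n!) * cos ((m - n - ν) t)`. Integration over
`[0, π]` keeps only the diagonal `m = n + ν`, and what is left is the series of `besselI ν z` with
`z ^ 2 = 4 * a * b = x ^ 2 - y ^ 2`, up to a factor `(z / (2 * a)) ^ ν`. The theorem combines the
orders `0` and `2`.
-/

open Real
open scoped Nat

section ExpProduct

/-- The term of index `(m, n)` in the double power series of `exp z * exp w`, from which the Fourier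
series of `exp (x cos t) * cos (y sin t - θ)` is built. -/
noncomputable def expMulExpTerm {𝕜 : Type*} [DivisionRing 𝕜] (z w : 𝕜) (p : ℕ × ℕ) : 𝕜 :=
  z ^ p.1 / p.1 ! * (w ^ p.2 / p.2 !)

variable {𝕜 : Type*} [NormedDivisionRing 𝕜] [NormedAlgebra ℚ 𝕜]

theorem summable_norm_expMulExpTerm (z w : 𝕜) : Summable fun p ↦ ‖expMulExpTerm z w p‖ :=
  Summable.mul_norm (f := fun n ↦ z ^ n / n !) (g := fun n ↦ w ^ n / n !)
    (NormedSpace.norm_expSeries_div_summable z) (NormedSpace.norm_expSeries_div_summable w)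

theorem hasSum_expMulExpTerm [CompleteSpace 𝕜] (z w : 𝕜) :
    HasSum (expMulExpTerm z w) (NormedSpace.exp z * NormedSpace.exp w) :=
  HasSum.mul (f := fun n ↦ z ^ n / n !) (g := fun n ↦ w ^ n / n !)
    (NormedSpace.expSeries_div_hasSum_exp z) (NormedSpace.expSeries_div_hasSum_exp w)
    (summable_norm_expMulExpTerm z w).of_norm

end ExpProduct

section FourierExpansion

theorem expMulExpTerm_mul_cexp_mul_I (a b t : ℝ) (p : ℕ × ℕ) :
    expMulExpTerm (a * Complex.exp (t * Complex.I)) (b * Complex.exp (-t * Complex.I)) p =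
      (expMulExpTerm a b p : ℝ) * Complex.exp (((p.1 - p.2) * t : ℝ) * Complex.I) := by
  have phase : Complex.exp (((p.1 - p.2) * t : ℝ) * Complex.I) =
      Complex.exp (t * Complex.I) ^ p.1 * Complex.exp (-t * Complex.I) ^ p.2 := by
    rw [← Complex.exp_nat_mul, ← Complex.exp_nat_mul, ← Complex.exp_add]
    congr 1
    push_cast
    ring
  rw [phase, expMulExpTerm, expMulExpTerm, mul_pow, mul_pow]
  push_cast
  ring

theorem cexp_mul_cexp_eq_exp_cos_mul_cexp_sin (a b t : ℝ) :
    Complex.exp (a * Complex.exp (t * Complex.I)) * Complex.exp (b * Complex.exp (-t * Complex.I)) =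
      (exp ((a + b) * cos t) : ℝ) * Complex.exp (((a - b) * sin t : ℝ) * Complex.I) := by
  rw [Complex.ofReal_exp, ← Complex.exp_add, ← Complex.exp_add, Complex.exp_mul_I,
    Complex.exp_mul_I, Complex.cos_neg, Complex.sin_neg]
  congr 1
  push_cast
  ring

theorem hasSum_expMulExpTerm_mul_cos (a b t θ : ℝ) :
    HasSum (fun p ↦ expMulExpTerm a b p * cos ((p.1 - p.2) * t - θ))
      (exp ((a + b) * cos t) * cos ((a - b) * sin t - θ)) := by
  have re_mul_phase (r β : ℝ) :
      (r * Complex.exp (β * Complex.I) * Complex.exp (-θ * Complex.I)).re = r * cos (β - θ) := by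
    rw [mul_assoc, ← Complex.exp_add, ← add_mul, ← Complex.ofReal_neg, ← Complex.ofReal_add,
      Complex.re_ofReal_mul, Complex.exp_ofReal_mul_I_re, ← sub_eq_add_neg]
  have complex_sum := Complex.hasSum_re <| (hasSum_expMulExpTerm
    (a * Complex.exp (t * Complex.I)) (b * Complex.exp (-t * Complex.I))).mul_right
      (Complex.exp (-θ * Complex.I))
  simpa only [← Complex.exp_eq_exp_ℂ, expMulExpTerm_mul_cexp_mul_I,
    cexp_mul_cexp_eq_exp_cos_mul_cexp_sin, re_mul_phase] using complex_sum

end FourierExpansion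

section BesselPhaseIntegral

/-- The integral `(1 / π) ∫₀^π exp (x cos t) cos (y sin t - ν t) dt`, which represents
`besselI ν (√(x ^ 2 - y ^ 2))` up to a power of `√(x ^ 2 - y ^ 2) / (x + y)`. -/
noncomputable def besselPhaseIntegral (ν : ℕ) (x y : ℝ) : ℝ :=
  1 / π * ∫ t in (0 : ℝ)..π, exp (x * cos t) * cos (y * sin t - ν * t)

theorem integral_cos_int_mul (n : ℤ) :
    ∫ t in (0 : ℝ)..π, cos (n * t) = if n = 0 then π else 0 := by
  split_ifs with hn
  · simp [hn]
  · rw [intervalIntegral.integral_comp_mul_left cos (Int.cast_ne_zero.mpr hn), integral_cos]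
    simp [sin_int_mul_pi]

theorem integral_cos_sub_mul_sub (m n ν : ℕ) :
    ∫ t in (0 : ℝ)..π, cos ((m - n) * t - ν * t) = if m = n + ν then π else 0 := by
  have diagonal : (m : ℤ) - n - ν = 0 ↔ m = n + ν := by lia
  simp only [← sub_mul, ← diagonal, ← integral_cos_int_mul]
  push_cast
  rfl

theorem hasSum_expMulExpTerm_mul_integral_cos (a b : ℝ) (ν : ℕ) :
    HasSum (fun p : ℕ × ℕ ↦
        expMulExpTerm a b p * ∫ t in (0 : ℝ)..π, cos ((p.1 - p.2) * t - ν * t))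
      (∫ t in (0 : ℝ)..π, exp ((a + b) * cos t) * cos ((a - b) * sin t - ν * t)) := by
  simp only [← intervalIntegral.integral_const_mul]
  refine intervalIntegral.hasSum_integral_of_dominated_convergence
    (fun p _ ↦ ‖expMulExpTerm a b p‖)
    (fun p ↦ (by fun_prop : Continuous _).aestronglyMeasurable)
    (fun p ↦ .of_forall fun t _ ↦ ?_)
    (.of_forall fun _ _ ↦ summable_norm_expMulExpTerm a b)
    intervalIntegrable_const
    (.of_forall fun t _ ↦ hasSum_expMulExpTerm_mul_cos a b t (ν * t))
  rw [norm_mul]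
  exact mul_le_of_le_one_right (norm_nonneg _) (abs_cos_le_one _)

theorem hasSum_expMulExpTerm_diagonal (a b : ℝ) (ν : ℕ) :
    HasSum (fun n ↦ expMulExpTerm a b (n + ν, n)) (besselPhaseIntegral ν (a + b) (a - b)) := by
  have diagonal_injective : Function.Injective fun n : ℕ ↦ (n + ν, n) :=
    fun _ _ h ↦ congrArg Prod.snd h
  have double_sum := (hasSum_expMulExpTerm_mul_integral_cos a b ν).mul_left (1 / π)
  simp only [integral_cos_sub_mul_sub] at double_sum
  rw [← diagonal_injective.hasSum_iff] at double_sum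
  · refine double_sum.congr_fun fun n ↦ ?_
    simp [mul_left_comm, pi_ne_zero]
  · rintro ⟨m, n⟩ off_diagonal
    have : m ≠ n + ν := fun h ↦ off_diagonal ⟨n, by simp only [h]⟩
    simp [this]

theorem add_pow_mul_besselI {x y z : ℝ} (hz : z ^ 2 = x ^ 2 - y ^ 2) (ν : ℕ) :
    (x + y) ^ ν * besselI ν z = z ^ ν * besselPhaseIntegral ν x y := by
  have diagonal_sum := hasSum_expMulExpTerm_diagonal ((x + y) / 2) ((x - y) / 2) ν
  rw [show (x + y) / 2 + (x - y) / 2 = x by ring,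
    show (x + y) / 2 - (x - y) / 2 = y by ring] at diagonal_sum
  have half_sq : (z / 2) ^ 2 = (x + y) / 2 * ((x - y) / 2) := by
    rw [div_pow, hz]
    ring
  rw [← diagonal_sum.tsum_eq, besselI, ← tsum_mul_left, ← tsum_mul_left]
  refine tsum_congr fun n ↦ ?_
  rw [expMulExpTerm, pow_add, pow_mul, half_sq, mul_pow, pow_add, div_pow z, div_pow (x + y) 2 ν]
  field_simp

theorem besselPhaseIntegral_zero_sub_mul (ν : ℕ) (x y c : ℝ) :
    besselPhaseIntegral 0 x y - c * besselPhaseIntegral ν x y =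
      1 / π * ∫ t in (0 : ℝ)..π,
        exp (x * cos t) * (cos (y * sin t) - c * cos (y * sin t - ν * t)) := by
  rw [besselPhaseIntegral, besselPhaseIntegral, mul_left_comm, ← mul_sub,
    ← intervalIntegral.integral_const_mul, ← intervalIntegral.integral_sub]
  · simp only [Nat.cast_zero, zero_mul, sub_zero, mul_sub, mul_left_comm]
  all_goals exact (by fun_prop : Continuous _).intervalIntegrable _ _

end BesselPhaseIntegral

theorem contCatalan_eq_besselPhaseIntegral {x y : ℝ} (hyx : |y| ≤ |x|) (hxy : x + y ≠ 0) :
    contCatalan x y = besselPhaseIntegral 0 x y -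
      ((x - y) / (x + y)) ^ 2 * besselPhaseIntegral 2 x y := by
  have sq_sqrt_sub : √(x ^ 2 - y ^ 2) ^ 2 = x ^ 2 - y ^ 2 :=
    sq_sqrt (sub_nonneg.mpr (sq_le_sq.mpr hyx))
  have order_zero : besselI 0 √(x ^ 2 - y ^ 2) = besselPhaseIntegral 0 x y := by
    simpa only [pow_zero, one_mul] using add_pow_mul_besselI sq_sqrt_sub 0
  have order_two : besselI 2 √(x ^ 2 - y ^ 2) =
      (x - y) / (x + y) * besselPhaseIntegral 2 x y := by
    refine mul_left_cancel₀ (pow_ne_zero 2 hxy) ?_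
    rw [add_pow_mul_besselI sq_sqrt_sub 2, sq_sqrt_sub]
    field_simp
    ring
  rw [contCatalan, order_zero, order_two]
  ring

theorem contCatalan_integral_rep_general {x y : ℝ} (hyx : |y| ≤ |x|) (hxy : x + y ≠ 0) :
    contCatalan x y =
      (1 / Real.pi) * ∫ t in (0 : ℝ)..Real.pi,
        Real.exp (x * Real.cos t) *
          (Real.cos (y * Real.sin t) -
            ((x - y) / (x + y)) ^ 2 * Real.cos (y * Real.sin t - 2 * t)) := by
  rw [contCatalan_eq_besselPhaseIntegral hyx hxy, besselPhaseIntegral_zero_sub_mul, Nat.cast_ofNat]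

theorem contCatalan_integral_rep (x y : ℝ) (hy : 0 ≤ y) (hxy : y ≤ x) (hpos : 0 < x + y) :
    contCatalan x y =
      (1 / Real.pi) * ∫ t in (0 : ℝ)..Real.pi,
        Real.exp (x * Real.cos t) *
          (Real.cos (y * Real.sin t) -
            ((x - y) / (x + y)) ^ 2 * Real.cos (y * Real.sin t - 2 * t)) :=
  contCatalan_integral_rep_general (abs_le_abs_of_nonneg hy hxy) hpos.ne'
end

section
/- For every natural number n, the n-th Catalan number is given by the semicircle moment formula Cₙ = (2/π) ∫_{−1}^{1} (2z)^{2n} √(1 − z²) dz. -/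
/-!
The function `z ^ (k + 1) * (1 - z ^ 2) ^ (3 / 2)` vanishes at `±1`, and integrating its derivative
relates the moments of orders `k + 2` and `k` of the weight `√(1 - z ^ 2)`. For `k = 2 * n`, after
rescaling by `4 ^ n`, this is the hypergeometric recurrence of the Catalan numbers; the initial
value is the area `π / 2` of the half disc.
-/

open Real intervalIntegral

theorem hasDerivAt_mul_sqrt (x : ℝ) : HasDerivAt (fun y ↦ y * √y) (3 / 2 * √x) x := by
  have deriv_of_ne (y : ℝ) (hy : y ≠ 0) : HasDerivAt (fun y ↦ y * √y) (3 / 2 * √y) y := by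
    refine ((hasDerivAt_id y).mul (hasDerivAt_sqrt hy)).congr_deriv ?_
    calc 1 * √y + y * (1 / (2 * √y)) = √y + (y / √y) / 2 := by ring
      _ = 3 / 2 * √y := by rw [div_sqrt]; ring
  rcases eq_or_ne x 0 with rfl | hx
  -- `√` is not differentiable at `0`, but the derivative extends continuously there.
  · exact hasDerivAt_of_hasDerivAt_of_ne deriv_of_ne (by fun_prop) (by fun_prop)
  · exact deriv_of_ne x hx

theorem hasDerivAt_pow_succ_mul_one_sub_sq_mul_sqrt (k : ℕ) (z : ℝ) :
    HasDerivAt (fun z ↦ z ^ (k + 1) * ((1 - z ^ 2) * √(1 - z ^ 2)))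
      ((k + 1) * (z ^ k * √(1 - z ^ 2)) - (k + 4) * (z ^ (k + 2) * √(1 - z ^ 2))) z := by
  have one_sub_sq : HasDerivAt (fun z : ℝ ↦ 1 - z ^ 2) (-(2 * z)) z := by
    simpa using (hasDerivAt_pow 2 z).const_sub 1
  have weight : HasDerivAt (fun z : ℝ ↦ (1 - z ^ 2) * √(1 - z ^ 2))
      (3 / 2 * √(1 - z ^ 2) * -(2 * z)) z :=
    HasDerivAt.comp (h₂ := fun y ↦ y * √y) z (hasDerivAt_mul_sqrt _) one_sub_sq
  refine ((hasDerivAt_pow (k + 1) z).mul weight).congr_deriv ?_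
  rw [Nat.add_sub_cancel]
  push_cast
  ring

theorem integral_pow_add_two_mul_sqrt_one_sub_sq (k : ℕ) (a b : ℝ) :
    (k + 4) * ∫ z in a..b, z ^ (k + 2) * √(1 - z ^ 2) =
      (k + 1) * (∫ z in a..b, z ^ k * √(1 - z ^ 2)) -
        (b ^ (k + 1) * ((1 - b ^ 2) * √(1 - b ^ 2)) -
          a ^ (k + 1) * ((1 - a ^ 2) * √(1 - a ^ 2))) := by
  have integrable (c : ℝ) (m : ℕ) :
      IntervalIntegrable (fun z ↦ c * (z ^ m * √(1 - z ^ 2))) MeasureTheory.volume a b :=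
    Continuous.intervalIntegrable (by fun_prop) a b
  have ftc := integral_eq_sub_of_hasDerivAt
    (fun z _ ↦ hasDerivAt_pow_succ_mul_one_sub_sq_mul_sqrt k z)
    ((integrable (k + 1) k).sub (integrable (k + 4) (k + 2)))
  rw [integral_sub (integrable _ _) (integrable _ _), integral_const_mul,
    integral_const_mul] at ftc
  linarith

theorem add_two_mul_catalan_succ (n : ℕ) :
    (n + 2) * catalan (n + 1) = 2 * (2 * n + 1) * catalan n := by
  refine Nat.eq_of_mul_eq_mul_left n.succ_pos ?_
  calc (n + 1) * ((n + 2) * catalan (n + 1))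
      = (n + 1) * (n + 1).centralBinom := by rw [← succ_mul_catalan_eq_centralBinom (n + 1)]
    _ = 2 * (2 * n + 1) * n.centralBinom := n.succ_mul_centralBinom_succ
    _ = (n + 1) * (2 * (2 * n + 1) * catalan n) := by
      rw [← succ_mul_catalan_eq_centralBinom n]; ring

theorem four_pow_mul_integral_pow_two_mul_mul_sqrt_one_sub_sq (n : ℕ) :
    4 ^ n * ∫ z in (-1 : ℝ)..1, z ^ (2 * n) * √(1 - z ^ 2) = π / 2 * catalan n := by
  induction n with
  | zero => simp [integral_sqrt_one_sub_sq]
  | succ n ih =>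
    have moment_rec :
        (2 * n + 4) * ∫ z in (-1 : ℝ)..1, z ^ (2 * n + 2) * √(1 - z ^ 2) =
          (2 * n + 1) * ∫ z in (-1 : ℝ)..1, z ^ (2 * n) * √(1 - z ^ 2) := by
      simpa using integral_pow_add_two_mul_sqrt_one_sub_sq (2 * n) (-1) 1
    have catalan_rec : (n + 2 : ℝ) * catalan (n + 1) = 2 * (2 * n + 1) * catalan n :=
      mod_cast add_two_mul_catalan_succ n
    refine mul_left_cancel₀ (by positivity : (n + 2 : ℝ) ≠ 0) ?_
    rw [mul_add_one]
    linear_combination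
      2 * 4 ^ n * moment_rec + 2 * (2 * n + 1) * ih - π / 2 * catalan_rec

theorem catalan_eq_semicircle_moment (n : ℕ) :
    (catalan n : ℝ) =
      (2 / Real.pi) * ∫ z in (-1 : ℝ)..1, (2 * z) ^ (2 * n) * Real.sqrt (1 - z ^ 2) := by
  have rescale (z : ℝ) :
      (2 * z) ^ (2 * n) * √(1 - z ^ 2) = 4 ^ n * (z ^ (2 * n) * √(1 - z ^ 2)) := by
    rw [mul_pow, pow_mul 2, mul_assoc]
    norm_num
  simp_rw [rescale]
  rw [integral_const_mul, four_pow_mul_integral_pow_two_mul_mul_sqrt_one_sub_sq]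
  field_simp
end

section
/- For every real number x ≥ 0, ∫_{0}^{x} {x choose s} ds = 2 (e^x − 1). -/
/-- The continuous binomial coefficient `{x choose s}`. -/
noncomputable def cbinom (x s : ℝ) : ℝ :=
  ∑' n : ℕ, (s * (x - s)) ^ n *
    (2 / ((n.factorial : ℝ)) ^ 2 + x / ((n.factorial : ℝ) * ((n + 1).factorial : ℝ)))

/-!
Integrate the series defining `cbinom x` term by term. With the divided powers `tⁿ / n!`, which
differentiate to one another, the beta integral says that the convolution of `tᵐ / m!` and
`tⁿ / n!` is `tᵐ⁺ⁿ⁺¹ / (m + n + 1)!`. Hence the `n`-th term of the series integrates to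
`2 (x²ⁿ⁺¹ / (2n+1)! + x²ⁿ⁺² / (2n+2)!)`, and these add up to `2 (sinh x + (cosh x - 1))`.
-/

open MeasureTheory Set
open scoped Nat

section BetaIntegral

lemma hasDerivAt_pow_succ_div_factorial {𝕜 : Type*} [NontriviallyNormedField 𝕜] [CharZero 𝕜]
    (n : ℕ) (t : 𝕜) : HasDerivAt (fun t : 𝕜 ↦ t ^ (n + 1) / (n + 1)!) (t ^ n / n !) t := by
  refine ((hasDerivAt_pow (n + 1) t).div_const _).congr_deriv ?_
  rw [Nat.factorial_succ, Nat.cast_mul, Nat.add_sub_cancel,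
    mul_div_mul_left _ _ (Nat.cast_ne_zero.2 n.succ_ne_zero)]

lemma integral_pow_div_factorial_mul_pow_div_factorial (a b : ℝ) (m n : ℕ) :
    ∫ s in a..b, (s - a) ^ m / m ! * ((b - s) ^ n / n !) =
      (b - a) ^ (m + n + 1) / (m + n + 1)! := by
  have deriv_left (m : ℕ) (s : ℝ) :
      HasDerivAt (fun s ↦ (s - a) ^ (m + 1) / (m + 1)!) ((s - a) ^ m / m !) s :=
    (hasDerivAt_pow_succ_div_factorial m (s - a)).comp_sub_const s a
  induction n generalizing m with
  | zero =>
    have ftc := intervalIntegral.integral_eq_sub_of_hasDerivAt (a := a) (b := b)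
      (fun s _ ↦ deriv_left m s) (Continuous.intervalIntegrable (by fun_prop) _ _)
    simpa using ftc
  | succ n ih =>
    have deriv_right (s : ℝ) :
        HasDerivAt (fun s ↦ (b - s) ^ (n + 1) / (n + 1)!) (-((b - s) ^ n / n !)) s :=
      (hasDerivAt_pow_succ_div_factorial n (b - s)).comp_const_sub b s
    have by_parts := intervalIntegral.integral_mul_deriv_eq_deriv_mul (a := a) (b := b)
      (fun s _ ↦ deriv_right s) (fun s _ ↦ deriv_left m s)
      (Continuous.intervalIntegrable (by fun_prop) _ _)
      (Continuous.intervalIntegrable (by fun_prop) _ _)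
    calc ∫ s in a..b, (s - a) ^ m / m ! * ((b - s) ^ (n + 1) / (n + 1)!)
        = ∫ s in a..b, (s - a) ^ (m + 1) / (m + 1)! * ((b - s) ^ n / n !) := by
          simpa [mul_comm] using by_parts
      _ = (b - a) ^ (m + (n + 1) + 1) / (m + (n + 1) + 1)! := by
          rw [ih, Nat.add_right_comm m 1 n, Nat.add_assoc m n 1]

lemma integral_sub_mul_sub_pow (a b : ℝ) (n : ℕ) :
    ∫ s in a..b, ((s - a) * (b - s)) ^ n =
      (n ! : ℝ) ^ 2 * ((b - a) ^ (2 * n + 1) / (2 * n + 1)!) := by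
  rw [two_mul, ← integral_pow_div_factorial_mul_pow_div_factorial,
    ← intervalIntegral.integral_const_mul]
  congr! 2
  rw [mul_pow]
  field_simp

end BetaIntegral

section TermwiseIntegration

variable {A : Type*} [NormedRing A] [NormOneClass A] [NormedSpace ℝ A] [CompleteSpace A]

lemma hasSum_integral_pow_mul {a b : ℝ} {g : ℝ → A} (hg : ContinuousOn g (uIcc a b))
    {c : ℕ → A} (hc : ∀ r : ℝ, Summable fun n ↦ r ^ n * ‖c n‖) :
    HasSum (fun n ↦ ∫ s in a..b, g s ^ n * c n) (∫ s in a..b, ∑' n, g s ^ n * c n) := by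
  obtain ⟨r, hr⟩ := isCompact_uIcc.exists_bound_of_continuousOn hg
  have norm_term_le (n : ℕ) (s : ℝ) (hs : s ∈ uIoc a b) : ‖g s ^ n * c n‖ ≤ r ^ n * ‖c n‖ := by
    have hgs : ‖g s ^ n‖ ≤ r ^ n :=
      (norm_pow_le _ _).trans (pow_le_pow_left₀ (norm_nonneg _) (hr s (uIoc_subset_uIcc hs)) n)
    exact (norm_mul_le _ _).trans (by gcongr)
  refine intervalIntegral.hasSum_integral_of_dominated_convergence (fun n _ ↦ r ^ n * ‖c n‖)
    (fun n ↦ ?_) (fun n ↦ ae_of_all _ (norm_term_le n)) (ae_of_all _ fun _ _ ↦ hc r)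
    intervalIntegrable_const (ae_of_all _ fun s hs ↦ ?_)
  · exact (((hg.pow n).mul continuousOn_const).mono uIoc_subset_uIcc).aestronglyMeasurable
      measurableSet_uIoc
  · exact ((hc r).of_norm_bounded fun n ↦ norm_term_le n s hs).hasSum

end TermwiseIntegration

section ContinuousBinomial

/-- The coefficient of `(s * (x - s)) ^ n` in the series defining `cbinom x s`. -/
noncomputable def cbinomCoeff (x : ℝ) (n : ℕ) : ℝ :=
  2 / (n ! : ℝ) ^ 2 + x / ((n ! : ℝ) * (n + 1)!)

variable (x : ℝ)

lemma norm_cbinomCoeff_le (n : ℕ) : ‖cbinomCoeff x n‖ ≤ (2 + |x|) / n ! := by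
  have one_le_factorial (k : ℕ) : (1 : ℝ) ≤ k ! := mod_cast k.factorial_pos
  have first : ‖2 / (n ! : ℝ) ^ 2‖ ≤ 2 / n ! := by
    rw [Real.norm_of_nonneg (by positivity)]
    gcongr
    exact le_self_pow₀ (one_le_factorial n) two_ne_zero
  have second : ‖x / ((n ! : ℝ) * (n + 1)!)‖ ≤ |x| / n ! := by
    rw [norm_div, Real.norm_eq_abs, Real.norm_of_nonneg (by positivity)]
    gcongr
    exact le_mul_of_one_le_right (by positivity) (one_le_factorial (n + 1))
  exact (norm_add_le_of_le first second).trans_eq (add_div _ _ _).symm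

lemma summable_pow_mul_norm_cbinomCoeff (r : ℝ) :
    Summable fun n ↦ r ^ n * ‖cbinomCoeff x n‖ := by
  refine ((Real.summable_pow_div_factorial |r|).mul_left (2 + |x|)).of_norm_bounded fun n ↦ ?_
  calc ‖r ^ n * ‖cbinomCoeff x n‖‖ = |r| ^ n * ‖cbinomCoeff x n‖ := by simp
    _ ≤ |r| ^ n * ((2 + |x|) / n !) := by gcongr; exact norm_cbinomCoeff_le x n
    _ = (2 + |x|) * (|r| ^ n / n !) := by ring

lemma integral_mul_sub_pow_mul_cbinomCoeff (n : ℕ) :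
    ∫ s in (0 : ℝ)..x, (s * (x - s)) ^ n * cbinomCoeff x n =
      2 * (x ^ (2 * n + 1) / (2 * n + 1)! + x ^ (2 * (n + 1)) / (2 * (n + 1))!) := by
  have beta := integral_sub_mul_sub_pow 0 x n
  simp only [sub_zero] at beta
  rw [intervalIntegral.integral_mul_const, beta, cbinomCoeff,
    show 2 * (n + 1) = 2 * n + 1 + 1 by ring, Nat.factorial_succ (2 * n + 1), Nat.factorial_succ n]
  push_cast
  field_simp
  ring

lemma hasSum_pow_odd_add_pow_even_div_factorial :
    HasSum (fun n : ℕ ↦ x ^ (2 * n + 1) / (2 * n + 1)! + x ^ (2 * (n + 1)) / (2 * (n + 1))!)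
      (Real.exp x - 1) := by
  have cosh_tail : HasSum (fun n : ℕ ↦ x ^ (2 * (n + 1)) / (2 * (n + 1))!) (Real.cosh x - 1) := by
    simpa using (hasSum_nat_add_iff' 1).2 x.hasSum_cosh
  rw [← Real.sinh_add_cosh, add_sub_assoc]
  exact x.hasSum_sinh.add cosh_tail

end ContinuousBinomial

theorem integral_cbinom_general (x : ℝ) :
    ∫ s in (0 : ℝ)..x, cbinom x s = 2 * (Real.exp x - 1) := by
  have termwise : HasSum (fun n ↦ ∫ s in (0 : ℝ)..x, (s * (x - s)) ^ n * cbinomCoeff x n)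
      (∫ s in (0 : ℝ)..x, cbinom x s) :=
    hasSum_integral_pow_mul (by fun_prop) (summable_pow_mul_norm_cbinomCoeff x)
  simp only [integral_mul_sub_pow_mul_cbinomCoeff] at termwise
  exact termwise.unique ((hasSum_pow_odd_add_pow_even_div_factorial x).mul_left 2)

theorem integral_cbinom (x : ℝ) (hx : 0 ≤ x) :
    (∫ s in (0 : ℝ)..x, cbinom x s) = 2 * (Real.exp x - 1) :=
  integral_cbinom_general x
end
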